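/- (W_2-convergence characterization in Hilbert space.) Let H be a separable Hilbert space and let μ_n (n ≥ 1) and μ_∞ be Borel probability measures on H with finite second moments. The following are equivalent: (i) W_2(μ_n, μ_∞) → 0 as n → ∞; (ii) e_{2,2}(μ_n, ·) → e_{2,2}(μ_∞, ·) uniformly on H²; (iii) e_{2,2}(μ_n, ·) → e_{2,2}(μ_∞, ·) pointwise on H². -/

import Mathlib

open MeasureTheory Filter Topology
open scoped ENNReal NNReal

/-- The `L^p`-quantization error function at level `N`. -/
noncomputable def quantErr {E : Type*} [NormedAddCommGroup E] [MeasurableSpace E]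
    (p : ℝ) (N : ℕ) (μ : Measure E) (x : Fin N → E) : ℝ :=
  (∫⁻ ξ, ⨅ i, (‖ξ - x i‖₊ : ℝ≥0∞) ^ p ∂μ).toReal ^ (1 / p)

/-- The `L^p`-Wasserstein distance. -/
noncomputable def wassersteinDist {E : Type*} [NormedAddCommGroup E] [MeasurableSpace E]
    (p : ℝ) (μ ν : Measure E) : ℝ :=
  (⨅ π ∈ {π : Measure (E × E) | π.map Prod.fst = μ ∧ π.map Prod.snd = ν},
      ∫⁻ q, (‖q.1 - q.2‖₊ : ℝ≥0∞) ^ p ∂π).toReal ^ (1 / p)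

/-- `μ` has a finite `p`-th moment. -/
def HasFiniteMoment {E : Type*} [NormedAddCommGroup E] [MeasurableSpace E]
    (p : ℝ) (μ : Measure E) : Prop :=
  ∫⁻ ξ, (‖ξ‖₊ : ℝ≥0∞) ^ p ∂μ ≠ ∞

/-! The quantization error at any codebook is `1`-Lipschitz for the Wasserstein distance, so
`W₂`-convergence makes the errors converge uniformly.

Conversely, for a codebook `{a, b}` on the line `ℝ u`, the difference
`‖ξ - a‖² - min (‖ξ - a‖²) (‖ξ - b‖²)` is twice `max (⟪u, ξ⟫ - c) 0` once `a` and `b` differ by `u`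
and are placed suitably. Pointwise convergence of the errors therefore gives convergence of
`∫ max (⟪u, ξ⟫ - c) 0` for all `c`, hence of the law of `⟪u, ξ⟫`, hence of the characteristic
functions; the codebook `{0}` gives convergence of the second moments. Characteristic functions
determine the limits of finite-dimensional projections, and convergence of the second moments makes
the error of such a projection uniformly small, which yields weak convergence. Finally, weak
convergence and convergence of moments give `W₂`-convergence by coupling the two measures on a
partition into small cells whose frontiers are null for the limit. -/

section RealLine

variable {ν : Measure ℝ} {c d : ℝ}

/-- The integrated tail of a law `ν` on the line, also known as its stop-loss transform: the mean
excess of `ν` over the level `c`. -/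
noncomputable def integratedTail (ν : Measure ℝ) (c : ℝ) : ℝ :=
  ∫ s, max (s - c) 0 ∂ν

theorem integrable_max_sub_zero [IsFiniteMeasure ν] (hν : Integrable id ν) (c : ℝ) :
    Integrable (fun s ↦ max (s - c) 0) ν :=
  (hν.sub (integrable_const c)).pos_part

theorem mul_measureReal_Ioi_le_integratedTail_sub [IsFiniteMeasure ν] (hν : Integrable id ν)
    (hcd : c ≤ d) : (d - c) * ν.real (Set.Ioi d) ≤ integratedTail ν c - integratedTail ν d := by
  have hc := integrable_max_sub_zero hν c
  have hd := integrable_max_sub_zero hν d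
  rw [integratedTail, integratedTail, ← integral_sub hc hd, mul_comm, ← smul_eq_mul,
    ← integral_indicator_const _ measurableSet_Ioi]
  refine integral_mono ((integrable_const _).indicator measurableSet_Ioi) (hc.sub hd) fun s ↦ ?_
  by_cases hs : s ∈ Set.Ioi d <;> simp only [hs, Set.indicator_of_mem, Set.indicator_of_notMem,
    not_false_eq_true] <;> grind

theorem integratedTail_sub_le_mul_measureReal_Ioi [IsFiniteMeasure ν] (hν : Integrable id ν)
    (hcd : c ≤ d) : integratedTail ν c - integratedTail ν d ≤ (d - c) * ν.real (Set.Ioi c) := by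
  have hc := integrable_max_sub_zero hν c
  have hd := integrable_max_sub_zero hν d
  rw [integratedTail, integratedTail, ← integral_sub hc hd, mul_comm, ← smul_eq_mul,
    ← integral_indicator_const _ measurableSet_Ioi]
  refine integral_mono (hc.sub hd) ((integrable_const _).indicator measurableSet_Ioi) fun s ↦ ?_
  by_cases hs : s ∈ Set.Ioi c <;> simp only [hs, Set.indicator_of_mem, Set.indicator_of_notMem,
    not_false_eq_true] <;> grind

theorem continuousAt_measureReal_Ioi [IsProbabilityMeasure ν] (hc : ν {c} = 0) :
    ContinuousAt (fun t ↦ ν.real (Set.Ioi t)) c := by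
  let F := ProbabilityTheory.cdf ν
  have tail_eq (t : ℝ) : ν.real (Set.Ioi t) = 1 - F t := by
    rw [ProbabilityTheory.cdf_eq_real, ← Set.compl_Iic,
      probReal_compl_eq_one_sub measurableSet_Iic]
  have leftLim_eq : Function.leftLim F c = F c := by
    have jump := F.measure_singleton c
    rw [ProbabilityTheory.measure_cdf, hc, eq_comm, ENNReal.ofReal_eq_zero] at jump
    linarith [F.mono.leftLim_le le_rfl (x := c)]
  simp only [tail_eq]
  refine continuousAt_const.sub (continuousAt_iff_continuous_left'_right'.2 ⟨?_, ?_⟩)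
  · exact F.mono.continuousWithinAt_Iio_iff_leftLim_eq.2 leftLim_eq
  · exact (F.right_continuous c).mono Set.Ioi_subset_Ici_self

theorem dense_setOf_measure_singleton_eq_zero (ν : Measure ℝ) [SFinite ν] :
    Dense {x : ℝ | ν {x} = 0} := by
  have countable_atoms : {x : ℝ | 0 < ν {x}}.Countable :=
    Measure.countable_meas_pos_of_disjoint_iUnion (fun x ↦ measurableSet_singleton x)
      fun x y hxy ↦ by simpa using hxy
  simpa [Set.compl_ofPred] using countable_atoms.dense_compl ℝ

variable {ι : Type*} {l : Filter ι}

theorem tendsto_measureReal_Ioi_of_tendsto_integratedTail {ν : ι → Measure ℝ} {ν' : Measure ℝ}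
    [∀ i, IsFiniteMeasure (ν i)] [IsProbabilityMeasure ν'] (hν : ∀ i, Integrable id (ν i))
    (hν' : Integrable id ν')
    (h : ∀ c, Tendsto (fun i ↦ integratedTail (ν i) c) l (𝓝 (integratedTail ν' c)))
    (hc : ν' {c} = 0) :
    Tendsto (fun i ↦ (ν i).real (Set.Ioi c)) l (𝓝 (ν'.real (Set.Ioi c))) := by
  have hcont := continuousAt_measureReal_Ioi hc
  refine tendsto_order.2 ⟨fun a ha ↦ ?_, fun b hb ↦ ?_⟩
  · obtain ⟨d, had, hcd⟩ := ((hcont.eventually_const_lt ha).filter_mono nhdsWithin_le_nhds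
      |>.and (self_mem_nhdsWithin (s := Set.Ioi c))).exists
    have hcd' : 0 < d - c := sub_pos.2 hcd
    have lim_gt : (d - c) * a < integratedTail ν' c - integratedTail ν' d :=
      (mul_lt_mul_of_pos_left had hcd').trans_le
        (mul_measureReal_Ioi_le_integratedTail_sub hν' (le_of_lt hcd))
    filter_upwards [((h c).sub (h d)).eventually_const_lt lim_gt] with i hi
    exact lt_of_mul_lt_mul_left
      (hi.trans_le (integratedTail_sub_le_mul_measureReal_Ioi (hν i) (le_of_lt hcd))) hcd'.le
  · obtain ⟨d, hdb, hdc⟩ := ((hcont.eventually_lt_const hb).filter_mono nhdsWithin_le_nhds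
      |>.and (self_mem_nhdsWithin (s := Set.Iio c))).exists
    have hdc' : 0 < c - d := sub_pos.2 hdc
    have lim_lt : integratedTail ν' d - integratedTail ν' c < (c - d) * b :=
      (integratedTail_sub_le_mul_measureReal_Ioi hν' (le_of_lt hdc)).trans_lt
        (mul_lt_mul_of_pos_left hdb hdc')
    filter_upwards [((h d).sub (h c)).eventually_lt_const lim_lt] with i hi
    exact lt_of_mul_lt_mul_left
      ((mul_measureReal_Ioi_le_integratedTail_sub (hν i) (le_of_lt hdc)).trans_lt hi) hdc'.le

theorem exists_Ioc_mem_nhds_subset_of_dense {S u : Set ℝ} (hS : Dense S) {x : ℝ} (hu : u ∈ 𝓝 x) :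
    ∃ a ∈ S, ∃ b ∈ S, a < b ∧ Set.Ioc a b ∈ 𝓝 x ∧ Set.Ioc a b ⊆ u := by
  obtain ⟨p, q, hx, hpq⟩ := mem_nhds_iff_exists_Ioo_subset.1 hu
  obtain ⟨a, haS, hpa, hax⟩ := hS.exists_between hx.1
  obtain ⟨b, hbS, hxb, hbq⟩ := hS.exists_between hx.2
  exact ⟨a, haS, b, hbS, hax.trans hxb, Ioc_mem_nhds hax hxb,
    fun y hy ↦ hpq ⟨hpa.trans hy.1, hy.2.trans_lt hbq⟩⟩

theorem tendsto_probabilityMeasure_of_tendsto_measureReal_Ioi [l.IsCountablyGenerated]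
    {ν : ι → ProbabilityMeasure ℝ} {ν' : ProbabilityMeasure ℝ}
    (h : ∀ c, (ν' : Measure ℝ) {c} = 0 → Tendsto (fun i ↦ (ν i : Measure ℝ).real (Set.Ioi c)) l
      (𝓝 ((ν' : Measure ℝ).real (Set.Ioi c)))) :
    Tendsto ν l (𝓝 ν') := by
  refine (isPiSystem_Ioc_mem {x | (ν' : Measure ℝ) {x} = 0} {x | (ν' : Measure ℝ) {x} = 0})
    |>.tendsto_probabilityMeasure_of_tendsto_of_mem ?_ ?_ ?_
  · rintro _ ⟨a, -, b, -, -, rfl⟩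
    exact measurableSet_Ioc
  · intro u hu x hx
    obtain ⟨a, ha, b, hb, hab, hmem, hsub⟩ := exists_Ioc_mem_nhds_subset_of_dense
      (dense_setOf_measure_singleton_eq_zero ν') (hu.mem_nhds hx)
    exact ⟨_, ⟨a, ha, b, hb, hab, rfl⟩, hmem, hsub⟩
  · rintro _ ⟨a, ha, b, hb, hab, rfl⟩
    have measure_Ioc (ρ : ProbabilityMeasure ℝ) : (ρ (Set.Ioc a b) : ℝ) =
        (ρ : Measure ℝ).real (Set.Ioi a) - (ρ : Measure ℝ).real (Set.Ioi b) := by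
      rw [← measureReal_sdiff (Set.Ioi_subset_Ioi hab.le) measurableSet_Ioi, Set.Ioi_sdiff_Ioi]
      rfl
    simpa only [← NNReal.tendsto_coe, measure_Ioc] using (h a ha).sub (h b hb)

end RealLine

section Couplings

/-- The couplings of `μ` and `ν`: the measures on the product with marginals `μ` and `ν`. -/
def couplings {X Y : Type*} [MeasurableSpace X] [MeasurableSpace Y] (μ : Measure X)
    (ν : Measure Y) : Set (Measure (X × Y)) :=
  {π | π.map Prod.fst = μ ∧ π.map Prod.snd = ν}

/-- The optimal transport cost between `μ` and `ν` for the cost function `edist ^ p`, that is, the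
`p`-th power of the `L^p`-Wasserstein distance before it is turned into a real number. -/
noncomputable def transportCost {X : Type*} [PseudoEMetricSpace X] [MeasurableSpace X] (p : ℝ)
    (μ ν : Measure X) : ℝ≥0∞ :=
  ⨅ π ∈ couplings μ ν, ∫⁻ q, edist q.1 q.2 ^ p ∂π

/-- The mean `p`-th power of the distance to `S` under `μ`. When `S` is the range of a codebook,
this is the `p`-th power of the quantization error before it is turned into a real number. -/
noncomputable def distortion {X : Type*} [PseudoEMetricSpace X] [MeasurableSpace X] (p : ℝ)
    (μ : Measure X) (S : Set X) : ℝ≥0∞ :=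
  ∫⁻ ξ, Metric.infEDist ξ S ^ p ∂μ

variable {X Y : Type*} [MeasurableSpace X] [MeasurableSpace Y]

theorem prod_mem_couplings (μ : Measure X) (ν : Measure Y) [IsProbabilityMeasure μ]
    [IsProbabilityMeasure ν] : μ.prod ν ∈ couplings μ ν :=
  ⟨by simp, by simp⟩

theorem map_swap_mem_couplings {μ : Measure X} {ν : Measure Y} {π : Measure (X × Y)}
    (hπ : π ∈ couplings μ ν) : π.map Prod.swap ∈ couplings ν μ := by
  obtain ⟨rfl, rfl⟩ := hπ
  exact ⟨Measure.fst_map_swap, Measure.snd_map_swap⟩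

variable [PseudoEMetricSpace X]

theorem transportCost_le_swap (p : ℝ) (μ ν : Measure X) :
    transportCost p μ ν ≤ transportCost p ν μ := by
  refine le_iInf₂ fun π hπ ↦ (iInf₂_le _ (map_swap_mem_couplings hπ)).trans_eq ?_
  refine (lintegral_map_equiv _ MeasurableEquiv.prodComm).trans (lintegral_congr fun q ↦ ?_)
  exact congrArg (· ^ p) (edist_comm q.2 q.1)

theorem transportCost_comm (p : ℝ) (μ ν : Measure X) :
    transportCost p μ ν = transportCost p ν μ :=
  le_antisymm (transportCost_le_swap p μ ν) (transportCost_le_swap p ν μ)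

variable [OpensMeasurableSpace X] [SecondCountableTopology X] {p : ℝ}

theorem distortion_rpow_le_add_of_mem_couplings (hp : 1 ≤ p) (S : Set X) {μ ν : Measure X}
    {π : Measure (X × X)} (hπ : π ∈ couplings μ ν) :
    distortion p μ S ^ (1 / p) ≤
      distortion p ν S ^ (1 / p) + (∫⁻ q, edist q.1 q.2 ^ p ∂π) ^ (1 / p) := by
  obtain ⟨rfl, rfl⟩ := hπ
  have : 0 ≤ p := by linarith
  have hdist : Measurable fun ξ : X ↦ Metric.infEDist ξ S ^ p :=
    measurable_infEDist.pow_const p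
  rw [distortion, distortion, lintegral_map hdist measurable_fst,
    lintegral_map hdist measurable_snd]
  calc (∫⁻ q, Metric.infEDist q.1 S ^ p ∂π) ^ (1 / p)
      ≤ (∫⁻ q, (Metric.infEDist q.2 S + edist q.1 q.2) ^ p ∂π) ^ (1 / p) := by
        gcongr
        exact Metric.infEDist_le_infEDist_add_edist
    _ ≤ _ := ENNReal.lintegral_Lp_add_le measurable_snd.infEDist.aemeasurable
        measurable_edist.aemeasurable hp

theorem distortion_rpow_le_add_transportCost (hp : 1 ≤ p) (S : Set X) (μ ν : Measure X) :
    distortion p μ S ^ (1 / p) ≤ distortion p ν S ^ (1 / p) + transportCost p μ ν ^ (1 / p) := by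
  have hp₀ : 0 < p := by linarith
  rw [← tsub_le_iff_left, one_div, ENNReal.le_rpow_inv_iff hp₀]
  refine le_iInf₂ fun π hπ ↦ ?_
  rw [← ENNReal.le_rpow_inv_iff hp₀, tsub_le_iff_left, ← one_div]
  exact distortion_rpow_le_add_of_mem_couplings hp S hπ

end Couplings

section Moments

variable {E : Type*} [NormedAddCommGroup E] {p : ℝ}

theorem edist_rpow_le_two_rpow_mul_max (hp : 0 ≤ p) (a b : E) :
    edist a b ^ p ≤ 2 ^ p * max (‖a‖ₑ ^ p) (‖b‖ₑ ^ p) := by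
  rw [← (ENNReal.monotone_rpow_of_nonneg hp).map_max, ← ENNReal.mul_rpow_of_nonneg _ _ hp, two_mul]
  refine ENNReal.rpow_le_rpow ?_ hp
  calc edist a b ≤ ‖a‖ₑ + ‖b‖ₑ := by rw [edist_eq_enorm_sub]; exact enorm_sub_le
    _ ≤ _ := add_le_add (le_max_left _ _) (le_max_right _ _)

variable [MeasurableSpace E] {μ ν : Measure E}

theorem wassersteinDist_eq_transportCost_rpow_toReal (p : ℝ) (μ ν : Measure E) :
    wassersteinDist p μ ν = (transportCost p μ ν ^ (1 / p)).toReal := by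
  simp only [wassersteinDist, transportCost, edist_eq_enorm_sub, ENNReal.toReal_rpow]
  rfl

theorem quantErr_eq_distortion_range_rpow_toReal (hp : 0 < p) (μ : Measure E) {N : ℕ}
    (x : Fin N → E) : quantErr p N μ x = (distortion p μ (Set.range x) ^ (1 / p)).toReal := by
  have iInf_rpow (ξ : E) : ⨅ i, (‖ξ - x i‖₊ : ℝ≥0∞) ^ p = Metric.infEDist ξ (Set.range x) ^ p := by
    simp only [Metric.infEDist, iInf_range, edist_eq_enorm_sub]
    exact ((ENNReal.orderIsoRpow p hp).map_iInf fun i ↦ ‖ξ - x i‖ₑ).symm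
  simp only [quantErr, distortion, iInf_rpow, ENNReal.toReal_rpow]

variable [OpensMeasurableSpace E]

theorem HasFiniteMoment.distortion_ne_top [IsFiniteMeasure μ] (hμ : HasFiniteMoment p μ)
    (hp : 0 ≤ p) {S : Set E} (hS : S.Nonempty) : distortion p μ S ≠ ∞ := by
  obtain ⟨a, ha⟩ := hS
  have bound_ne_top : ∫⁻ ξ, 2 ^ p * (‖ξ‖ₑ ^ p + ‖a‖ₑ ^ p) ∂μ ≠ ∞ := by
    rw [lintegral_const_mul _ (by fun_prop), lintegral_add_left (by fun_prop), lintegral_const]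
    finiteness [hμ]
  refine ne_top_of_le_ne_top bound_ne_top (lintegral_mono fun ξ ↦ ?_)
  calc Metric.infEDist ξ S ^ p ≤ edist ξ a ^ p :=
        ENNReal.rpow_le_rpow (Metric.infEDist_le_edist_of_mem ha) hp
    _ ≤ 2 ^ p * max (‖ξ‖ₑ ^ p) (‖a‖ₑ ^ p) := edist_rpow_le_two_rpow_mul_max hp ξ a
    _ ≤ _ := by gcongr; exact max_le_add_of_nonneg zero_le zero_le

theorem HasFiniteMoment.transportCost_ne_top [IsProbabilityMeasure μ] [IsProbabilityMeasure ν]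
    (hp : 0 ≤ p) (hμ : HasFiniteMoment p μ) (hν : HasFiniteMoment p ν) :
    transportCost p μ ν ≠ ∞ := by
  have bound_ne_top : ∫⁻ q : E × E, 2 ^ p * (‖q.1‖ₑ ^ p + ‖q.2‖ₑ ^ p) ∂(μ.prod ν) ≠ ∞ := by
    rw [lintegral_const_mul _ (by fun_prop), lintegral_add_left (by fun_prop)]
    rw [measurePreserving_fst.lintegral_comp (f := fun ξ : E ↦ ‖ξ‖ₑ ^ p) (by fun_prop),
      measurePreserving_snd.lintegral_comp (f := fun ξ : E ↦ ‖ξ‖ₑ ^ p) (by fun_prop)]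
    finiteness [hμ, hν]
  refine ne_top_of_le_ne_top bound_ne_top ((iInf₂_le _ (prod_mem_couplings μ ν)).trans
    (lintegral_mono fun q ↦ (edist_rpow_le_two_rpow_mul_max hp _ _).trans ?_))
  gcongr
  exact max_le_add_of_nonneg zero_le zero_le

variable [SecondCountableTopology E] [IsProbabilityMeasure μ] [IsProbabilityMeasure ν] {N : ℕ}
  [NeZero N]

theorem quantErr_le_add_wassersteinDist (hp : 1 ≤ p) (hμ : HasFiniteMoment p μ)
    (hν : HasFiniteMoment p ν) (x : Fin N → E) :
    quantErr p N μ x ≤ quantErr p N ν x + wassersteinDist p μ ν := by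
  have hp₀ : 0 < p := by linarith
  have hD := hν.distortion_ne_top hp₀.le (Set.range_nonempty x)
  have hT := hμ.transportCost_ne_top hp₀.le hν
  simp only [quantErr_eq_distortion_range_rpow_toReal hp₀,
    wassersteinDist_eq_transportCost_rpow_toReal]
  rw [← ENNReal.toReal_add (by finiteness) (by finiteness)]
  exact ENNReal.toReal_mono (by finiteness) (distortion_rpow_le_add_transportCost hp _ μ ν)

theorem abs_quantErr_sub_le_wassersteinDist (hp : 1 ≤ p) (hμ : HasFiniteMoment p μ)
    (hν : HasFiniteMoment p ν) (x : Fin N → E) :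
    |quantErr p N μ x - quantErr p N ν x| ≤ wassersteinDist p μ ν := by
  have h₁ := quantErr_le_add_wassersteinDist hp hμ hν x
  have h₂ := quantErr_le_add_wassersteinDist hp hν hμ x
  rw [wassersteinDist_eq_transportCost_rpow_toReal, transportCost_comm,
    ← wassersteinDist_eq_transportCost_rpow_toReal] at h₂
  exact abs_sub_le_iff.2 ⟨by linarith, by linarith⟩

theorem tendstoUniformly_quantErr_of_tendsto_wassersteinDist {ι : Type*} {l : Filter ι}
    {μ : ι → Measure E} [∀ i, IsProbabilityMeasure (μ i)] (hp : 1 ≤ p)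
    (hμ : ∀ i, HasFiniteMoment p (μ i)) (hν : HasFiniteMoment p ν)
    (h : Tendsto (fun i ↦ wassersteinDist p (μ i) ν) l (𝓝 0)) :
    TendstoUniformly (fun i (x : Fin N → E) ↦ quantErr p N (μ i) x) (quantErr p N ν) l := by
  refine Metric.tendstoUniformly_iff.2 fun ε hε ↦ ?_
  filter_upwards [h.eventually_lt_const hε] with i hi x
  rw [dist_comm, Real.dist_eq]
  exact (abs_quantErr_sub_le_wassersteinDist hp (hμ i) hν x).trans_lt hi

end Moments

section CouplingConstruction

variable {X Y : Type*} [MeasurableSpace X] [MeasurableSpace Y]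

theorem inv_smul_measure_univ_smul_self (μ : Measure X) [IsFiniteMeasure μ] :
    (μ Set.univ)⁻¹ • μ Set.univ • μ = μ := by
  rcases eq_or_ne μ 0 with rfl | hμ
  · simp
  · rw [smul_smul, ENNReal.inv_mul_cancel (by simpa using hμ) (measure_ne_top _ _), one_smul]

theorem exists_mem_couplings_ge {μ : Measure X} {ν : Measure Y} [IsFiniteMeasure μ]
    [IsFiniteMeasure ν] (hμν : μ Set.univ = ν Set.univ) {π₀ : Measure (X × Y)}
    (hfst : π₀.fst ≤ μ) (hsnd : π₀.snd ≤ ν) : ∃ π ∈ couplings μ ν, π₀ ≤ π := by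
  have : IsFiniteMeasure π₀.fst := isFiniteMeasure_of_le μ hfst
  have : IsFiniteMeasure π₀.snd := isFiniteMeasure_of_le ν hsnd
  set μ' := μ - π₀.fst
  set ν' := ν - π₀.snd
  have mass_eq : μ' Set.univ = ν' Set.univ := by
    simp only [μ', ν', Measure.sub_apply MeasurableSet.univ hfst,
      Measure.sub_apply MeasurableSet.univ hsnd, Measure.fst_univ, Measure.snd_univ, hμν]
  refine ⟨π₀ + (μ' Set.univ)⁻¹ • μ'.prod ν', ⟨?_, ?_⟩, Measure.le_add_right le_rfl⟩
  · rw [Measure.map_add _ _ measurable_fst, Measure.map_smul, Measure.map_fst_prod, ← mass_eq,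
      inv_smul_measure_univ_smul_self, add_comm]
    exact Measure.sub_add_cancel_of_le hfst
  · rw [Measure.map_add _ _ measurable_snd, Measure.map_smul, Measure.map_snd_prod, mass_eq,
      inv_smul_measure_univ_smul_self, add_comm]
    exact Measure.sub_add_cancel_of_le hsnd

/-- A measure transporting mass `min (μ A) (ν A)` from `μ` to `ν` within the cell `A`,
regardless of the positions inside `A`. -/
noncomputable def cellCoupling (μ ν : Measure X) (A : Set X) : Measure (X × X) :=
  (max (μ A) (ν A))⁻¹ • (μ.restrict A).prod (ν.restrict A)

variable {μ ν : Measure X} {A : Set X}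

theorem cellCoupling_fst_le [SFinite ν] : (cellCoupling μ ν A).fst ≤ μ.restrict A := by
  rw [cellCoupling, Measure.fst, Measure.map_smul, Measure.map_fst_prod,
    Measure.restrict_apply_univ, smul_smul]
  calc _ ≤ (1 : ℝ≥0∞) • μ.restrict A := by
        gcongr
        rw [mul_comm]
        exact ENNReal.div_le_of_le_mul (by simp)
    _ = _ := one_smul _ _

theorem cellCoupling_snd_le [SFinite ν] : (cellCoupling μ ν A).snd ≤ ν.restrict A := by
  rw [cellCoupling, Measure.snd, Measure.map_smul, Measure.map_snd_prod,
    Measure.restrict_apply_univ, smul_smul]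
  calc _ ≤ (1 : ℝ≥0∞) • ν.restrict A := by
        gcongr
        rw [mul_comm]
        exact ENNReal.div_le_of_le_mul (by simp)
    _ = _ := one_smul _ _

theorem cellCoupling_prod_self [IsFiniteMeasure μ] [IsFiniteMeasure ν] (A : Set X) :
    cellCoupling μ ν A (A ×ˢ A) = min (μ A) (ν A) := by
  rw [cellCoupling, Measure.smul_apply, Measure.prod_prod, Measure.restrict_apply_self,
    Measure.restrict_apply_self, smul_eq_mul, ← min_mul_max (μ A), mul_left_comm]
  rcases eq_or_ne (max (μ A) (ν A)) 0 with h | h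
  · simp_all
  · rw [ENNReal.inv_mul_cancel h (by finiteness), mul_one]

theorem sum_restrict_le {ι : Type*} {s : Finset ι} {A : ι → Set X}
    (hA : ∀ i, MeasurableSet (A i)) (hdisj : (s : Set ι).PairwiseDisjoint A) :
    ∑ i ∈ s, μ.restrict (A i) ≤ μ := by
  rw [← Measure.sum_coe_finset, ← Measure.restrict_biUnion_finset hdisj hA]
  exact Measure.restrict_le_self

theorem exists_mem_couplings_sum_min_le [IsFiniteMeasure μ] [IsFiniteMeasure ν]
    (hμν : μ Set.univ = ν Set.univ) {ι : Type*} {s : Finset ι} {A : ι → Set X}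
    (hA : ∀ i, MeasurableSet (A i)) (hdisj : (s : Set ι).PairwiseDisjoint A) :
    ∃ π ∈ couplings μ ν, ∑ i ∈ s, min (μ (A i)) (ν (A i)) ≤ π (⋃ i ∈ s, A i ×ˢ A i) := by
  have hfst : (∑ i ∈ s, cellCoupling μ ν (A i)).fst ≤ μ := by
    rw [Measure.fst, Measure.map_finset_sum measurable_fst.aemeasurable]
    exact (Finset.sum_le_sum fun _ _ ↦ cellCoupling_fst_le).trans (sum_restrict_le hA hdisj)
  have hsnd : (∑ i ∈ s, cellCoupling μ ν (A i)).snd ≤ ν := by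
    rw [Measure.snd, Measure.map_finset_sum measurable_snd.aemeasurable]
    exact (Finset.sum_le_sum fun _ _ ↦ cellCoupling_snd_le).trans (sum_restrict_le hA hdisj)
  obtain ⟨π, hπ, hle⟩ := exists_mem_couplings_ge hμν hfst hsnd
  refine ⟨π, hπ, le_trans ?_ (hle _)⟩
  rw [Measure.finsetSum_apply]
  refine Finset.sum_le_sum fun i hi ↦ ?_
  rw [← cellCoupling_prod_self]
  exact measure_mono (Set.subset_biUnion_of_mem (u := fun i ↦ A i ×ˢ A i) hi)

end CouplingConstruction

section WeakConvergence

theorem measure_frontier_disjointed_eq_zero {X : Type*} [TopologicalSpace X] [MeasurableSpace X]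
    {μ : Measure X} {B : ℕ → Set X} (hB : ∀ n, μ (frontier (B n)) = 0) (n : ℕ) :
    μ (frontier (disjointed B n)) = 0 := by
  refine disjointedRec (p := fun s ↦ μ (frontier s) = 0) (fun s m hs ↦ ?_) (hB n)
  rw [Set.sdiff_eq]
  exact null_frontier_inter hs (by rw [frontier_compl]; exact hB m)

theorem exists_ball_cover_null_frontier {X : Type*} [PseudoMetricSpace X]
    [SecondCountableTopology X] [Nonempty X] [MeasurableSpace X] [OpensMeasurableSpace X]
    (μ : Measure X) [SFinite μ] {δ : ℝ} (hδ : 0 < δ) :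
    ∃ (x : ℕ → X) (r : ℕ → ℝ), (∀ n, r n < δ) ∧ (∀ n, μ (frontier (Metric.ball (x n) (r n))) = 0) ∧
      ⋃ n, Metric.ball (x n) (r n) = Set.univ := by
  have exists_radius (y : X) : ∃ r ∈ Set.Ioo (δ / 2) δ, μ (frontier (Metric.ball y r)) = 0 := by
    simpa only [Metric.thickening_singleton] using
      exists_null_frontier_thickening μ {y} (half_lt_self hδ)
  choose r hr hfrontier using exists_radius
  refine ⟨TopologicalSpace.denseSeq X, fun n ↦ r (TopologicalSpace.denseSeq X n), fun n ↦ (hr _).2,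
    fun n ↦ hfrontier _, Set.iUnion_eq_univ_iff.2 fun y ↦ ?_⟩
  obtain ⟨n, hn⟩ := (TopologicalSpace.denseRange_denseSeq X).exists_dist_lt y (half_pos hδ)
  exact ⟨n, hn.trans (hr _).1⟩

theorem exists_partition_null_frontier {X : Type*} [PseudoMetricSpace X]
    [SecondCountableTopology X] [Nonempty X] [MeasurableSpace X] [OpensMeasurableSpace X]
    (μ : Measure X) [SFinite μ] {δ : ℝ} (hδ : 0 < δ) :
    ∃ A : ℕ → Set X, (∀ n, MeasurableSet (A n)) ∧ Pairwise (Function.onFun Disjoint A) ∧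
      (∀ n, μ (frontier (A n)) = 0) ∧ (∀ n, ∀ x ∈ A n, ∀ y ∈ A n, dist x y < δ) ∧
      ⋃ n, A n = Set.univ := by
  obtain ⟨x, r, hr, hfrontier, hcover⟩ := exists_ball_cover_null_frontier μ (half_pos hδ)
  refine ⟨disjointed fun n ↦ Metric.ball (x n) (r n),
    MeasurableSet.disjointed fun n ↦ measurableSet_ball, disjoint_disjointed _,
    measure_frontier_disjointed_eq_zero hfrontier, fun n y hy z hz ↦ ?_, by
    rw [iUnion_disjointed, hcover]⟩
  have hy' : dist y (x n) < r n := disjointed_subset _ n hy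
  have hz' : dist z (x n) < r n := disjointed_subset _ n hz
  linarith [dist_triangle_right y z (x n), hr n]

variable {E : Type*} [NormedAddCommGroup E] {p : ℝ}

theorem edist_rpow_le_add_indicator (hp : 0 ≤ p) {G : Set (E × E)} {δ : ℝ≥0∞}
    (hG : ∀ q ∈ G, edist q.1 q.2 ≤ δ) (R : ℝ≥0∞) (q : E × E) :
    edist q.1 q.2 ^ p ≤
      δ ^ p + 2 ^ p * (R * Gᶜ.indicator 1 q + ((‖q.1‖ₑ ^ p - R) + (‖q.2‖ₑ ^ p - R))) := by
  by_cases hq : q ∈ G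
  · exact (ENNReal.rpow_le_rpow (hG q hq) hp).trans le_self_add
  · refine (edist_rpow_le_two_rpow_mul_max hp q.1 q.2).trans (le_trans ?_ le_add_self)
    rw [Set.indicator_of_mem hq, Pi.one_apply, mul_one]
    gcongr
    refine max_le (le_add_tsub (b := R) |>.trans ?_) (le_add_tsub (b := R) |>.trans ?_) <;> gcongr
    exacts [le_self_add, le_add_self]

variable [MeasurableSpace E]

/-- The `p`-th moment of `μ` in excess of the level `R`, i.e. `∫ (‖ξ‖ ^ p - R)⁺ dμ(ξ)`, the
positive part being that of the truncated subtraction of `ℝ≥0∞`. -/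
noncomputable def excessMoment (p : ℝ) (μ : Measure E) (R : ℝ≥0∞) : ℝ≥0∞ :=
  ∫⁻ ξ, (‖ξ‖ₑ ^ p - R) ∂μ

variable [OpensMeasurableSpace E]

theorem lintegral_min_ne_top {X : Type*} [MeasurableSpace X] {μ : Measure X} [IsFiniteMeasure μ]
    (f : X → ℝ≥0∞) {R : ℝ≥0∞} (hR : R ≠ ∞) : ∫⁻ x, min (f x) R ∂μ ≠ ∞ := by
  refine ne_top_of_le_ne_top ?_ (lintegral_mono fun x ↦ min_le_right _ R)
  rw [lintegral_const]
  finiteness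

theorem excessMoment_eq_sub {μ : Measure E} [IsFiniteMeasure μ] {R : ℝ≥0∞} (hR : R ≠ ∞) :
    excessMoment p μ R = ∫⁻ ξ, ‖ξ‖ₑ ^ p ∂μ - ∫⁻ ξ, min (‖ξ‖ₑ ^ p) R ∂μ := by
  rw [← lintegral_sub (by fun_prop) (lintegral_min_ne_top _ hR)
    (ae_of_all _ fun ξ ↦ min_le_left _ _)]
  simp only [excessMoment, tsub_min]

theorem HasFiniteMoment.tendsto_excessMoment {μ : Measure E} (hp : 0 ≤ p)
    (hμ : HasFiniteMoment p μ) :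
    Tendsto (fun R : ℕ ↦ excessMoment p μ R) atTop (𝓝 0) := by
  rw [← lintegral_zero (μ := μ)]
  refine tendsto_lintegral_of_dominated_convergence (fun ξ ↦ ‖ξ‖ₑ ^ p) (fun R ↦ by fun_prop)
    (fun R ↦ ae_of_all _ fun ξ ↦ tsub_le_self) hμ (ae_of_all _ fun ξ ↦ ?_)
  obtain ⟨R₀, hR₀⟩ := ENNReal.exists_nat_gt (r := ‖ξ‖ₑ ^ p) (by finiteness)
  refine tendsto_const_nhds.congr' ?_
  filter_upwards [eventually_ge_atTop R₀] with R hR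
  exact (tsub_eq_zero_of_le (hR₀.le.trans (by exact_mod_cast hR))).symm

theorem transportCost_le_of_partition [SecondCountableTopology E] (hp : 0 ≤ p) {μ ν : Measure E}
    [IsProbabilityMeasure μ] [IsProbabilityMeasure ν] {ι : Type*} {s : Finset ι} {A : ι → Set E}
    (hA : ∀ i, MeasurableSet (A i)) (hdisj : (s : Set ι).PairwiseDisjoint A) {δ : ℝ≥0∞}
    (hδ : ∀ i ∈ s, ∀ x ∈ A i, ∀ y ∈ A i, edist x y ≤ δ) (R : ℝ≥0∞) :
    transportCost p μ ν ≤ δ ^ p + 2 ^ p * (R * (1 - ∑ i ∈ s, min (μ (A i)) (ν (A i))) +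
      (excessMoment p μ R + excessMoment p ν R)) := by
  obtain ⟨π, hπ, hle⟩ := exists_mem_couplings_sum_min_le (μ := μ) (ν := ν) (by simp) hA hdisj
  obtain ⟨rfl, rfl⟩ := hπ
  have : IsProbabilityMeasure π :=
    Measure.isProbabilityMeasure_of_map (μ := π) Prod.fst
  set G : Set (E × E) := ⋃ i ∈ s, A i ×ˢ A i
  have measurableSet_G : MeasurableSet G := s.measurableSet_biUnion fun i _ ↦ (hA i).prod (hA i)
  have edist_le_of_mem (q : E × E) (hq : q ∈ G) : edist q.1 q.2 ≤ δ := by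
    obtain ⟨i, hi, h₁, h₂⟩ := Set.mem_iUnion₂.1 hq
    exact hδ i hi _ h₁ _ h₂
  calc transportCost p (π.map Prod.fst) (π.map Prod.snd)
      ≤ ∫⁻ q, edist q.1 q.2 ^ p ∂π := iInf₂_le _ ⟨rfl, rfl⟩
    _ ≤ ∫⁻ q, (δ ^ p + 2 ^ p * (R * Gᶜ.indicator 1 q +
          ((‖q.1‖ₑ ^ p - R) + (‖q.2‖ₑ ^ p - R)))) ∂π :=
        lintegral_mono (edist_rpow_le_add_indicator hp edist_le_of_mem R)
    _ = δ ^ p + 2 ^ p * (R * π Gᶜ +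
          (excessMoment p (π.map Prod.fst) R + excessMoment p (π.map Prod.snd) R)) := by
        have measurable_ind : Measurable (Gᶜ.indicator (1 : E × E → ℝ≥0∞)) :=
          measurable_one.indicator measurableSet_G.compl
        rw [lintegral_add_left (by fun_prop), lintegral_const_mul _ (by fun_prop),
          lintegral_add_left (by fun_prop), lintegral_const_mul _ (by fun_prop),
          lintegral_indicator_one measurableSet_G.compl, lintegral_add_left (by fun_prop),
          excessMoment, excessMoment, lintegral_map (by fun_prop) measurable_fst,
          lintegral_map (by fun_prop) measurable_snd, lintegral_const, measure_univ, mul_one]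
    _ ≤ _ := by
        rw [prob_compl_eq_one_sub measurableSet_G]
        gcongr

variable {ι : Type*} {l : Filter ι}

theorem tendsto_lintegral_min_of_tendsto {X : Type*} [TopologicalSpace X] [MeasurableSpace X]
    [OpensMeasurableSpace X] {μ : ι → ProbabilityMeasure X} {ν : ProbabilityMeasure X}
    (h : Tendsto μ l (𝓝 ν)) {f : X → ℝ≥0} (hf : Continuous f) (R : ℝ≥0) :
    Tendsto (fun i ↦ ∫⁻ x, min (f x) R ∂(μ i : Measure X)) l
      (𝓝 (∫⁻ x, min (f x) R ∂(ν : Measure X))) := by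
  let g : BoundedContinuousFunction X ℝ≥0 :=
    .mkOfBound ⟨fun x ↦ min (f x) R, hf.min continuous_const⟩ R fun x y ↦ by
      rw [NNReal.dist_eq, abs_le]
      simp
  have := ProbabilityMeasure.tendsto_iff_forall_lintegral_tendsto.1 h g
  simpa [g] using this

variable {μ : ι → ProbabilityMeasure E} {ν : ProbabilityMeasure E}

theorem tendsto_lintegral_min_enorm_rpow_of_tendsto (hp : 0 ≤ p) (h : Tendsto μ l (𝓝 ν)) (R : ℕ) :
    Tendsto (fun i ↦ ∫⁻ ξ, min (‖ξ‖ₑ ^ p) R ∂(μ i : Measure E)) l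
      (𝓝 (∫⁻ ξ, min (‖ξ‖ₑ ^ p) R ∂(ν : Measure E))) := by
  have cont : Continuous fun ξ : E ↦ ‖ξ‖₊ ^ p := by fun_prop (disch := assumption)
  simpa [ENNReal.coe_rpow_of_nonneg _ hp, enorm_eq_nnnorm] using
    tendsto_lintegral_min_of_tendsto h cont R

theorem tendsto_excessMoment_of_tendsto (hp : 0 ≤ p) (hweak : Tendsto μ l (𝓝 ν))
    (hν : HasFiniteMoment p (ν : Measure E))
    (hmoment : Tendsto (fun i ↦ ∫⁻ ξ, ‖ξ‖ₑ ^ p ∂(μ i : Measure E)) l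
      (𝓝 (∫⁻ ξ, ‖ξ‖ₑ ^ p ∂(ν : Measure E)))) (R : ℕ) :
    Tendsto (fun i ↦ excessMoment p (μ i : Measure E) R) l
      (𝓝 (excessMoment p (ν : Measure E) R)) := by
  simp only [excessMoment_eq_sub (ENNReal.natCast_ne_top R)]
  exact ENNReal.Tendsto.sub hmoment (tendsto_lintegral_min_enorm_rpow_of_tendsto hp hweak R)
    (.inl hν)

theorem tendsto_sum_min_of_tendsto {X : Type*} [PseudoMetricSpace X] [MeasurableSpace X]
    [OpensMeasurableSpace X] {μ : ι → ProbabilityMeasure X} {ν : ProbabilityMeasure X}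
    (h : Tendsto μ l (𝓝 ν)) {κ : Type*} (s : Finset κ) {A : κ → Set X}
    (hA : ∀ k, (ν : Measure X) (frontier (A k)) = 0) :
    Tendsto (fun i ↦ ∑ k ∈ s, min ((μ i : Measure X) (A k)) ((ν : Measure X) (A k))) l
      (𝓝 (∑ k ∈ s, (ν : Measure X) (A k))) := by
  refine tendsto_finsetSum s fun k _ ↦ ?_
  simpa using (ProbabilityMeasure.tendsto_measure_of_null_frontier_of_tendsto' h (hA k)).min
    (tendsto_const_nhds (x := (ν : Measure X) (A k)))

theorem tendsto_add_mul_mul_one_sub_add {d c R m₀ e₀ : ℝ≥0∞} (hc : c ≠ ∞) (hR : R ≠ ∞)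
    {m e : ι → ℝ≥0∞} (hm : Tendsto m l (𝓝 m₀)) (he : Tendsto e l (𝓝 e₀)) :
    Tendsto (fun i ↦ d + c * (R * (1 - m i) + e i)) l (𝓝 (d + c * (R * (1 - m₀) + e₀))) :=
  have compl : Tendsto (fun i ↦ R * (1 - m i)) l (𝓝 (R * (1 - m₀))) :=
    ENNReal.Tendsto.const_mul (ENNReal.Tendsto.sub tendsto_const_nhds hm (by simp)) (.inr hR)
  tendsto_const_nhds.add (ENNReal.Tendsto.const_mul (compl.add he) (.inr hc))

variable [SecondCountableTopology E]

theorem eventually_transportCost_lt_of_tendsto (hp : 0 ≤ p) (hweak : Tendsto μ l (𝓝 ν))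
    (hν : HasFiniteMoment p (ν : Measure E))
    (hmoment : Tendsto (fun i ↦ ∫⁻ ξ, ‖ξ‖ₑ ^ p ∂(μ i : Measure E)) l
      (𝓝 (∫⁻ ξ, ‖ξ‖ₑ ^ p ∂(ν : Measure E)))) {δ : ℝ≥0} (hδ : 0 < δ) {R : ℕ} {ε : ℝ≥0∞}
    (hε : (δ : ℝ≥0∞) ^ p +
      2 ^ p * (excessMoment p (ν : Measure E) R + excessMoment p (ν : Measure E) R) < ε) :
    ∀ᶠ i in l, transportCost p (μ i : Measure E) ν < ε := by
  obtain ⟨A, hA, hdisj, hfrontier, hdiam, hcover⟩ :=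
    exists_partition_null_frontier (ν : Measure E) (NNReal.coe_pos.2 hδ)
  have edist_le (n : ℕ) (x : E) (hx : x ∈ A n) (y : E) (hy : y ∈ A n) : edist x y ≤ δ := by
    rw [edist_le_coe, ← NNReal.coe_le_coe, coe_nndist]
    exact (hdiam n x hx y hy).le
  have mass : Tendsto (fun k ↦ ∑ n ∈ Finset.range k, (ν : Measure E) (A n)) atTop (𝓝 1) := by
    simpa [← measure_iUnion hdisj hA, hcover] using
      ENNReal.tendsto_nat_tsum fun n ↦ (ν : Measure E) (A n)
  have hc : (2 : ℝ≥0∞) ^ p ≠ ∞ := by finiteness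
  obtain ⟨k, hk⟩ := ((tendsto_add_mul_mul_one_sub_add hc (ENNReal.natCast_ne_top R) mass
    tendsto_const_nhds).eventually_lt_const (by simpa using hε)).exists
  filter_upwards [(tendsto_add_mul_mul_one_sub_add hc (ENNReal.natCast_ne_top R)
    (tendsto_sum_min_of_tendsto hweak (Finset.range k) hfrontier)
    ((tendsto_excessMoment_of_tendsto hp hweak hν hmoment R).add_const
      _)).eventually_lt_const hk] with i hi
  exact (transportCost_le_of_partition hp hA (hdisj.set_pairwise _) (fun n _ ↦ edist_le n)
    R).trans_lt hi

theorem tendsto_transportCost_of_tendsto (hp : 0 < p) (hweak : Tendsto μ l (𝓝 ν))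
    (hν : HasFiniteMoment p (ν : Measure E))
    (hmoment : Tendsto (fun i ↦ ∫⁻ ξ, ‖ξ‖ₑ ^ p ∂(μ i : Measure E)) l
      (𝓝 (∫⁻ ξ, ‖ξ‖ₑ ^ p ∂(ν : Measure E)))) :
    Tendsto (fun i ↦ transportCost p (μ i : Measure E) ν) l (𝓝 0) := by
  refine ENNReal.tendsto_nhds_zero.2 fun ε hε ↦ ?_
  have small_cells : Tendsto (fun δ : ℝ≥0 ↦ (δ : ℝ≥0∞) ^ p) (𝓝[>] 0) (𝓝 0) := by
    have : Continuous fun δ : ℝ≥0 ↦ (δ : ℝ≥0∞) ^ p := by fun_prop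
    simpa [hp] using (this.tendsto 0).mono_left nhdsWithin_le_nhds
  obtain ⟨δ, hδε, hδ⟩ := ((small_cells.eventually_lt_const hε).and self_mem_nhdsWithin).exists
  have small_tails : Tendsto (fun R : ℕ ↦ (δ : ℝ≥0∞) ^ p +
      2 ^ p * (excessMoment p (ν : Measure E) R + excessMoment p (ν : Measure E) R)) atTop
      (𝓝 (δ ^ p)) := by
    have exc := hν.tendsto_excessMoment hp.le
    simpa using tendsto_const_nhds.add
      (ENNReal.Tendsto.const_mul (exc.add exc) (.inr (by finiteness)))
  obtain ⟨R, hR⟩ := (small_tails.eventually_lt_const hδε).exists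
  exact (eventually_transportCost_lt_of_tendsto hp.le hweak hν hmoment hδ hR).mono
    fun _ h ↦ h.le

theorem tendsto_wassersteinDist_of_tendsto (hp : 0 < p) (hweak : Tendsto μ l (𝓝 ν))
    (hν : HasFiniteMoment p (ν : Measure E))
    (hmoment : Tendsto (fun i ↦ ∫⁻ ξ, ‖ξ‖ₑ ^ p ∂(μ i : Measure E)) l
      (𝓝 (∫⁻ ξ, ‖ξ‖ₑ ^ p ∂(ν : Measure E)))) :
    Tendsto (fun i ↦ wassersteinDist p (μ i : Measure E) ν) l (𝓝 0) := by
  simp only [wassersteinDist_eq_transportCost_rpow_toReal]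
  have cost := (tendsto_transportCost_of_tendsto hp hweak hν hmoment).ennrpow_const (1 / p)
  simpa [hp, Function.comp_def] using (ENNReal.tendsto_toReal (by simp [hp])).comp cost

end WeakConvergence

section Approximation

variable {E : Type*} [NormedAddCommGroup E] [MeasurableSpace E] [BorelSpace E]
  [SecondCountableTopology E] {p : ℝ}

theorem edist_integral_integral_map_le (hp : 1 ≤ p) {μ : Measure E} [IsProbabilityMeasure μ]
    {T : E → E} (hT : Measurable T) {f : E → ℝ} {C : ℝ} (hC : ∀ x y, dist (f x) (f y) ≤ C)
    {L : ℝ≥0} (hL : LipschitzWith L f) :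
    edist (∫ ξ, f ξ ∂μ) (∫ ξ, f ξ ∂(μ.map T)) ≤
      L * (∫⁻ ξ, ‖ξ - T ξ‖ₑ ^ p ∂μ) ^ (1 / p) := by
  have norm_le (x : E) : ‖f x‖ ≤ ‖f 0‖ + C := by
    have := norm_le_insert' (f x) (f 0)
    rw [← dist_eq_norm] at this
    linarith [hC x 0]
  have f_meas : Measurable f := hL.continuous.measurable
  have hf : Integrable f μ := .of_bound f_meas.aestronglyMeasurable _ (ae_of_all _ norm_le)
  have hfT : Integrable (fun ξ ↦ f (T ξ)) μ :=
    .of_bound (f_meas.comp hT).aestronglyMeasurable _ (ae_of_all _ fun ξ ↦ norm_le _)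
  rw [integral_map hT.aemeasurable f_meas.aestronglyMeasurable, edist_eq_enorm_sub,
    ← integral_sub hf hfT]
  calc ‖∫ ξ, (f ξ - f (T ξ)) ∂μ‖ₑ ≤ ∫⁻ ξ, ‖f ξ - f (T ξ)‖ₑ ∂μ := enorm_integral_le_lintegral_enorm _
    _ ≤ ∫⁻ ξ, L * ‖ξ - T ξ‖ₑ ∂μ := lintegral_mono fun ξ ↦ by
        simpa only [edist_eq_enorm_sub] using hL.edist_le_mul ξ (T ξ)
    _ = L * ∫⁻ ξ, ‖ξ - T ξ‖ₑ ∂μ := lintegral_const_mul _ (by fun_prop)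
    _ ≤ _ := by
        gcongr
        simpa [eLpNorm'_eq_lintegral_enorm] using eLpNorm'_le_eLpNorm'_of_exponent_le one_pos hp μ
          (f := fun ξ ↦ ξ - T ξ) (measurable_id.sub hT).aestronglyMeasurable

theorem tendsto_of_forall_exists_tendsto_map {ι : Type*} {l : Filter ι} [l.IsCountablyGenerated]
    (hp : 1 ≤ p) {μ : ι → ProbabilityMeasure E} {ν : ProbabilityMeasure E}
    (h : ∀ ε > 0, ∃ (T : E → E) (hT : Measurable T),
      Tendsto (fun i ↦ (μ i).map hT.aemeasurable) l (𝓝 (ν.map hT.aemeasurable)) ∧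
      ∫⁻ ξ, ‖ξ - T ξ‖ₑ ^ p ∂(ν : Measure E) < ε ∧
      ∀ᶠ i in l, ∫⁻ ξ, ‖ξ - T ξ‖ₑ ^ p ∂(μ i : Measure E) < ε) :
    Tendsto μ l (𝓝 ν) := by
  have hp₀ : 0 < p := by linarith
  refine tendsto_iff_forall_lipschitz_integral_tendsto.2 fun f ⟨C, hC⟩ ⟨L, hL⟩ ↦ ?_
  refine EMetric.tendsto_nhds.2 fun ε hε ↦ ?_
  have hε' : 0 < ε / 3 := ENNReal.div_pos hε.ne' (by simp)
  have modulus : Tendsto (fun η : ℝ≥0∞ ↦ L * η ^ (1 / p)) (𝓝[>] 0) (𝓝 0) := by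
    have root := ((ENNReal.continuous_rpow_const (y := 1 / p)).tendsto 0).mono_left
      (nhdsWithin_le_nhds (s := Set.Ioi 0))
    simpa [hp₀] using ENNReal.Tendsto.const_mul (a := L) root (.inr (by simp))
  obtain ⟨η, hη, hη₀⟩ := ((modulus.eventually_lt_const hε').and self_mem_nhdsWithin).exists
  obtain ⟨T, hT, hweak, hν, hμ⟩ := h η hη₀
  have close {ρ : Measure E} [IsProbabilityMeasure ρ] (hρ : ∫⁻ ξ, ‖ξ - T ξ‖ₑ ^ p ∂ρ < η) :
      edist (∫ ξ, f ξ ∂ρ) (∫ ξ, f ξ ∂(ρ.map T)) < ε / 3 := by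
    refine (edist_integral_integral_map_le hp hT hC hL).trans_lt (lt_of_le_of_lt ?_ hη)
    gcongr
  have hmap := tendsto_iff_forall_lipschitz_integral_tendsto.1 hweak f ⟨C, hC⟩ ⟨L, hL⟩
  filter_upwards [hμ, EMetric.tendsto_nhds.1 hmap _ hε'] with i hi hi'
  calc edist (∫ ξ, f ξ ∂(μ i : Measure E)) (∫ ξ, f ξ ∂(ν : Measure E))
      ≤ edist (∫ ξ, f ξ ∂(μ i : Measure E)) (∫ ξ, f ξ ∂((μ i : Measure E).map T)) +
        edist (∫ ξ, f ξ ∂((μ i : Measure E).map T)) (∫ ξ, f ξ ∂((ν : Measure E).map T)) +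
        edist (∫ ξ, f ξ ∂((ν : Measure E).map T)) (∫ ξ, f ξ ∂(ν : Measure E)) :=
        edist_triangle4 _ _ _ _
    _ < ε / 3 + ε / 3 + ε / 3 := by
        rw [edist_comm (∫ ξ, f ξ ∂((ν : Measure E).map T))]
        gcongr
        exacts [close hi, hi', close hν]
    _ = ε := ENNReal.add_thirds ε

end Approximation

section Hilbert

variable {H : Type*} [NormedAddCommGroup H] [InnerProductSpace ℝ H]

theorem enorm_rpow_two_eq_add_starProjection (V : Submodule ℝ H) [V.HasOrthogonalProjection]
    (ξ : H) :
    ‖ξ‖ₑ ^ (2 : ℝ) = ‖V.starProjection ξ‖ₑ ^ (2 : ℝ) + ‖ξ - V.starProjection ξ‖ₑ ^ (2 : ℝ) := by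
  have pythagoras := V.norm_sq_eq_add_norm_sq_starProjection ξ
  rw [Submodule.starProjection_orthogonal_val] at pythagoras
  simp only [ENNReal.rpow_two, ← ofReal_norm, ← ENNReal.ofReal_pow (norm_nonneg _)]
  rw [pythagoras, ENNReal.ofReal_add (by positivity) (by positivity)]

variable [MeasurableSpace H] [BorelSpace H]

theorem charFun_map_inner (μ : Measure H) (u : H) (t : ℝ) :
    charFun (μ.map (inner ℝ u)) t = charFun μ (t • u) := by
  rw [charFun_apply, charFun_apply, integral_map (by fun_prop) (by fun_prop)]
  simp [inner_smul_right, real_inner_comm]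

theorem charFun_map_orthogonalProjectionOnto (μ : Measure H) (V : Submodule ℝ H)
    [V.HasOrthogonalProjection] (v : V) :
    charFun (μ.map V.orthogonalProjectionOnto) v = charFun μ (v : H) := by
  rw [charFun_apply, charFun_apply, integral_map (by fun_prop) (by fun_prop)]
  simp

variable {ι : Type*} {l : Filter ι}

theorem tendsto_map_starProjection_of_tendsto_charFun {μ : ℕ → ProbabilityMeasure H}
    {ν : ProbabilityMeasure H}
    (h : ∀ u, Tendsto (fun n ↦ charFun (μ n : Measure H) u) atTop
      (𝓝 (charFun (ν : Measure H) u)))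
    (V : Submodule ℝ H) [FiniteDimensional ℝ V] :
    Tendsto (fun n ↦ (μ n).map V.starProjection.continuous.aemeasurable) atTop
      (𝓝 (ν.map V.starProjection.continuous.aemeasurable)) := by
  have marginals : Tendsto (fun n ↦ (μ n).map V.orthogonalProjectionOnto.continuous.aemeasurable)
      atTop (𝓝 (ν.map V.orthogonalProjectionOnto.continuous.aemeasurable)) :=
    ProbabilityMeasure.tendsto_iff_tendsto_charFun.2 fun v ↦ by
      simpa [charFun_map_orthogonalProjectionOnto] using h v
  have map_map (ρ : ProbabilityMeasure H) : ρ.map V.starProjection.continuous.aemeasurable =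
      (ρ.map V.orthogonalProjectionOnto.continuous.aemeasurable).map
        continuous_subtype_val.aemeasurable := by
    ext1
    simp only [ProbabilityMeasure.toMeasure_map]
    rw [Measure.map_map (by fun_prop) (by fun_prop)]
    rfl
  simpa only [map_map] using
    ProbabilityMeasure.tendsto_map_of_tendsto_of_continuous _ _ marginals continuous_subtype_val

theorem lintegral_enorm_rpow_two_eq_add_starProjection (ρ : Measure H) (V : Submodule ℝ H)
    [V.HasOrthogonalProjection] :
    ∫⁻ ξ, ‖ξ‖ₑ ^ (2 : ℝ) ∂ρ = ∫⁻ ξ, ‖ξ‖ₑ ^ (2 : ℝ) ∂(ρ.map V.starProjection) +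
      ∫⁻ ξ, ‖ξ - V.starProjection ξ‖ₑ ^ (2 : ℝ) ∂ρ := by
  rw [lintegral_map (by fun_prop) (by fun_prop), ← lintegral_add_left (by fun_prop)]
  simp only [← enorm_rpow_two_eq_add_starProjection V]

theorem HasFiniteMoment.map_starProjection {ρ : Measure H} (hρ : HasFiniteMoment 2 ρ)
    (V : Submodule ℝ H) [V.HasOrthogonalProjection] :
    HasFiniteMoment 2 (ρ.map V.starProjection) :=
  ne_top_of_le_ne_top hρ
    (le_self_add.trans_eq (lintegral_enorm_rpow_two_eq_add_starProjection ρ V).symm)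

theorem eventually_lintegral_sub_starProjection_lt (V : Submodule ℝ H) [V.HasOrthogonalProjection]
    {μ : ι → ProbabilityMeasure H} {ν : ProbabilityMeasure H}
    (hweak : Tendsto (fun i ↦ (μ i).map V.starProjection.continuous.aemeasurable) l
      (𝓝 (ν.map V.starProjection.continuous.aemeasurable)))
    (hν : HasFiniteMoment 2 (ν : Measure H))
    (hmoment : Tendsto (fun i ↦ ∫⁻ ξ, ‖ξ‖ₑ ^ (2 : ℝ) ∂(μ i : Measure H)) l
      (𝓝 (∫⁻ ξ, ‖ξ‖ₑ ^ (2 : ℝ) ∂(ν : Measure H))))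
    {ε : ℝ≥0∞} (hε : ∫⁻ ξ, ‖ξ - V.starProjection ξ‖ₑ ^ (2 : ℝ) ∂(ν : Measure H) < ε) :
    ∀ᶠ i in l, ∫⁻ ξ, ‖ξ - V.starProjection ξ‖ₑ ^ (2 : ℝ) ∂(μ i : Measure H) < ε := by
  -- The left side converges along `μ` since truncation turns weak convergence into convergence of
  -- integrals, and the right side exceeds the residual by an excess that vanishes as `R → ∞`.
  have tail_eq (R : ℕ) (ρ : ProbabilityMeasure H) :
      ∫⁻ ξ, ‖ξ‖ₑ ^ (2 : ℝ) ∂(ρ : Measure H) -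
          ∫⁻ ξ, min (‖ξ‖ₑ ^ (2 : ℝ)) R ∂((ρ : Measure H).map V.starProjection) =
        excessMoment 2 ((ρ : Measure H).map V.starProjection) R +
          ∫⁻ ξ, ‖ξ - V.starProjection ξ‖ₑ ^ (2 : ℝ) ∂(ρ : Measure H) := by
    rw [lintegral_enorm_rpow_two_eq_add_starProjection (ρ : Measure H) V,
      excessMoment_eq_sub (ENNReal.natCast_ne_top R),
      ENNReal.sub_add_eq_add_sub (lintegral_mono fun ξ ↦ min_le_left _ _)
        (lintegral_min_ne_top _ (ENNReal.natCast_ne_top R))]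
  have small_excess : Tendsto (fun R : ℕ ↦ excessMoment 2 ((ν : Measure H).map V.starProjection) R +
      ∫⁻ ξ, ‖ξ - V.starProjection ξ‖ₑ ^ (2 : ℝ) ∂(ν : Measure H)) atTop
      (𝓝 (∫⁻ ξ, ‖ξ - V.starProjection ξ‖ₑ ^ (2 : ℝ) ∂(ν : Measure H))) := by
    simpa using ((hν.map_starProjection V).tendsto_excessMoment zero_le_two).add_const _
  obtain ⟨R, hR⟩ := (small_excess.eventually_lt_const hε).exists
  have tail_tendsto := ENNReal.Tendsto.sub hmoment
    (tendsto_lintegral_min_enorm_rpow_of_tendsto zero_le_two hweak R) (.inl hν)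
  simp only [ProbabilityMeasure.toMeasure_map, tail_eq] at tail_tendsto
  filter_upwards [tail_tendsto.eventually_lt_const hR] with i hi
  exact le_add_self.trans_lt hi

theorem exists_finiteDimensional_lintegral_sub_starProjection_lt
    [TopologicalSpace.SeparableSpace H] {μ : Measure H} (hμ : HasFiniteMoment 2 μ) {ε : ℝ≥0∞}
    (hε : 0 < ε) :
    ∃ (V : Submodule ℝ H) (_ : FiniteDimensional ℝ V),
      ∫⁻ ξ, ‖ξ - V.starProjection ξ‖ₑ ^ (2 : ℝ) ∂μ < ε := by
  let U (n : ℕ) : Submodule ℝ H := .span ℝ (TopologicalSpace.denseSeq H '' Set.Iic n)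
  have finiteDimensional_U (n : ℕ) : FiniteDimensional ℝ (U n) :=
    FiniteDimensional.span_of_finite ℝ ((Set.finite_Iic n).image _)
  have monotone_U : Monotone U := fun m n hmn ↦
    Submodule.span_mono (Set.image_mono (Set.Iic_subset_Iic.2 hmn))
  have dense_U : ⊤ ≤ (⨆ n, U n).topologicalClosure := fun x _ ↦ by
    refine closure_mono ?_ (TopologicalSpace.denseRange_denseSeq H x)
    rintro _ ⟨n, rfl⟩
    exact le_iSup U n (Submodule.subset_span ⟨n, Set.self_mem_Iic, rfl⟩)
  have tails : Tendsto (fun n ↦ ∫⁻ ξ, ‖ξ - (U n).starProjection ξ‖ₑ ^ (2 : ℝ) ∂μ) atTop (𝓝 0) := by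
    rw [← lintegral_zero (μ := μ)]
    refine tendsto_lintegral_of_dominated_convergence (fun ξ ↦ ‖ξ‖ₑ ^ (2 : ℝ))
      (fun n ↦ by fun_prop) (fun n ↦ ae_of_all _ fun ξ ↦ ?_) hμ (ae_of_all _ fun ξ ↦ ?_)
    · exact le_add_self.trans_eq (enorm_rpow_two_eq_add_starProjection (U n) ξ).symm
    · have approx := Submodule.starProjection_tendsto_self U monotone_U ξ dense_U
      simpa using ((tendsto_const_nhds (x := ξ)).sub approx).enorm.ennrpow_const 2
  obtain ⟨n, hn⟩ := (tails.eventually_lt_const hε).exists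
  exact ⟨U n, finiteDimensional_U n, hn⟩

theorem tendsto_of_tendsto_charFun_of_tendsto_lintegral [TopologicalSpace.SeparableSpace H]
    {μ : ℕ → ProbabilityMeasure H} {ν : ProbabilityMeasure H}
    (hcharFun : ∀ u, Tendsto (fun n ↦ charFun (μ n : Measure H) u) atTop
      (𝓝 (charFun (ν : Measure H) u)))
    (hν : HasFiniteMoment 2 (ν : Measure H))
    (hmoment : Tendsto (fun n ↦ ∫⁻ ξ, ‖ξ‖ₑ ^ (2 : ℝ) ∂(μ n : Measure H)) atTop
      (𝓝 (∫⁻ ξ, ‖ξ‖ₑ ^ (2 : ℝ) ∂(ν : Measure H)))) :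
    Tendsto μ atTop (𝓝 ν) := by
  have := UniformSpace.secondCountable_of_separable H
  refine tendsto_of_forall_exists_tendsto_map one_le_two fun ε hε ↦ ?_
  obtain ⟨V, _, hV⟩ := exists_finiteDimensional_lintegral_sub_starProjection_lt hν hε
  have hweak := tendsto_map_starProjection_of_tendsto_charFun hcharFun V
  exact ⟨V.starProjection, V.starProjection.continuous.measurable, hweak, hV,
    eventually_lintegral_sub_starProjection_lt V hweak hν hmoment hV⟩

end Hilbert

section DistanceToCodebook

theorem infDist_pair {X : Type*} [PseudoMetricSpace X] (ξ a b : X) :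
    Metric.infDist ξ {a, b} = min (dist ξ a) (dist ξ b) := by
  rw [Metric.infDist, Set.insert_eq, Metric.infEDist_union, Metric.infEDist_singleton,
    Metric.infEDist_singleton, ENNReal.toReal_min (edist_ne_top _ _) (edist_ne_top _ _), dist_edist,
    dist_edist]

variable {E : Type*} [NormedAddCommGroup E] [MeasurableSpace E] {p : ℝ} {μ : Measure E}

theorem distortion_singleton_zero (p : ℝ) (μ : Measure E) :
    distortion p μ {0} = ∫⁻ ξ, ‖ξ‖ₑ ^ p ∂μ := by
  simp [distortion]

variable [OpensMeasurableSpace E]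

theorem toReal_distortion (p : ℝ) (μ : Measure E) {S : Set E} (hp : 0 ≤ p) (hS : S.Nonempty) :
    (distortion p μ S).toReal = ∫ ξ, Metric.infDist ξ S ^ p ∂μ := by
  rw [distortion, ← integral_toReal (measurable_infEDist.pow_const p).aemeasurable
    (ae_of_all _ fun ξ ↦ ENNReal.rpow_lt_top_of_nonneg hp (Metric.infEDist_ne_top hS))]
  simp only [← ENNReal.toReal_rpow, Metric.infDist]

theorem HasFiniteMoment.integrable_infDist_rpow [IsFiniteMeasure μ] (hp : 0 ≤ p)
    (hμ : HasFiniteMoment p μ) {S : Set E} (hS : S.Nonempty) :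
    Integrable (fun ξ ↦ Metric.infDist ξ S ^ p) μ := by
  simpa only [← ENNReal.toReal_rpow, Metric.infDist] using integrable_toReal_of_lintegral_ne_top
    (measurable_infEDist.pow_const p).aemeasurable (hμ.distortion_ne_top hp hS)

theorem HasFiniteMoment.integrable_id [SecondCountableTopology E] [IsFiniteMeasure μ] (hp : 1 ≤ p)
    (hμ : HasFiniteMoment p μ) : Integrable id μ := by
  have hp₀ : 0 < p := by linarith
  have memLp_id : MemLp id (ENNReal.ofReal p) μ := by
    refine ⟨measurable_id.aestronglyMeasurable, ?_⟩
    rw [eLpNorm_lt_top_iff_lintegral_rpow_enorm_lt_top (by simpa using hp₀) (by simp),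
      ENNReal.toReal_ofReal hp₀.le]
    exact hμ.lt_top
  exact memLp_id.integrable (by simpa using hp)

variable {ι : Type*} {l : Filter ι}

theorem tendsto_distortion_range_of_tendsto_quantErr {N : ℕ} [NeZero N] (hp : 0 < p)
    {μ : ι → Measure E} {ν : Measure E} [∀ i, IsFiniteMeasure (μ i)] [IsFiniteMeasure ν]
    (hμ : ∀ i, HasFiniteMoment p (μ i)) (hν : HasFiniteMoment p ν) {x : Fin N → E}
    (h : Tendsto (fun i ↦ quantErr p N (μ i) x) l (𝓝 (quantErr p N ν x))) :
    Tendsto (fun i ↦ distortion p (μ i) (Set.range x)) l (𝓝 (distortion p ν (Set.range x))) := by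
  have hx : (Set.range x).Nonempty := Set.range_nonempty x
  have root_ne_top {ρ : Measure E} [IsFiniteMeasure ρ] (hρ : HasFiniteMoment p ρ) :
      distortion p ρ (Set.range x) ^ (1 / p) ≠ ∞ :=
    ENNReal.rpow_ne_top_of_nonneg (by positivity) (hρ.distortion_ne_top hp.le hx)
  simp only [quantErr_eq_distortion_range_rpow_toReal hp] at h
  have roots := (ENNReal.tendsto_toReal_iff (fun i ↦ root_ne_top (hμ i)) (root_ne_top hν)).1 h
  simpa [hp.ne'] using roots.ennrpow_const p

theorem tendsto_distortion_pair_of_tendsto_quantErr {N : ℕ} (hN : 2 ≤ N) (hp : 0 < p)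
    {μ : ι → Measure E} {ν : Measure E} [∀ i, IsFiniteMeasure (μ i)] [IsFiniteMeasure ν]
    (hμ : ∀ i, HasFiniteMoment p (μ i)) (hν : HasFiniteMoment p ν)
    (h : ∀ x, Tendsto (fun i ↦ quantErr p N (μ i) x) l (𝓝 (quantErr p N ν x))) (a b : E) :
    Tendsto (fun i ↦ distortion p (μ i) {a, b}) l (𝓝 (distortion p ν {a, b})) := by
  have : NeZero N := ⟨by omega⟩
  let x (i : Fin N) : E := if i.val = 0 then a else b
  have range_x : Set.range x = {a, b} := by
    refine Set.Subset.antisymm (Set.range_subset_iff.2 fun i ↦ ?_) (Set.pair_subset ?_ ?_)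
    · dsimp only [x]
      split_ifs <;> simp
    · exact ⟨⟨0, by omega⟩, by simp [x]⟩
    · exact ⟨⟨1, by omega⟩, by simp [x]⟩
  rw [← range_x]
  exact tendsto_distortion_range_of_tendsto_quantErr hp hμ hν (h x)

end DistanceToCodebook

section Quantization

variable {H : Type*} [NormedAddCommGroup H] [InnerProductSpace ℝ H]

theorem norm_sub_smul_sq (u ξ : H) (s : ℝ) :
    ‖ξ - s • u‖ ^ 2 = ‖ξ‖ ^ 2 - 2 * s * inner ℝ u ξ + s ^ 2 * ‖u‖ ^ 2 := by
  rw [norm_sub_sq_real, inner_smul_right, norm_smul, real_inner_comm, mul_pow, Real.norm_eq_abs,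
    sq_abs]
  ring

theorem exists_max_inner_sub_eq_infDist_sq_sub {u : H} (hu : u ≠ 0) (c : ℝ) :
    ∃ a b : H, ∀ ξ, max (inner ℝ u ξ - c) 0 =
      (Metric.infDist ξ {a} ^ 2 - Metric.infDist ξ {a, b} ^ 2) / 2 := by
  have hu₀ : ‖u‖ ≠ 0 := norm_ne_zero_iff.2 hu
  set t : ℝ := (2 * c / ‖u‖ ^ 2 - 1) / 2 with ht
  have hc : c = (2 * t + 1) * ‖u‖ ^ 2 / 2 := by rw [ht]; field_simp; ring
  refine ⟨t • u, (t + 1) • u, fun ξ ↦ ?_⟩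
  have min_sq : min ‖ξ - t • u‖ ‖ξ - (t + 1) • u‖ ^ 2 =
      min (‖ξ - t • u‖ ^ 2) (‖ξ - (t + 1) • u‖ ^ 2) :=
    pow_left_monotoneOn.map_min (norm_nonneg _) (norm_nonneg _)
  have gap : ‖ξ - t • u‖ ^ 2 - ‖ξ - (t + 1) • u‖ ^ 2 = 2 * (inner ℝ u ξ - c) := by
    rw [norm_sub_smul_sq, norm_sub_smul_sq, hc]
    ring
  rw [infDist_pair, Metric.infDist_singleton, dist_eq_norm, dist_eq_norm, min_sq,
    ← max_sub_sub_left, sub_self, gap, max_comm, ← max_div_div_right zero_le_two, zero_div,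
    mul_div_cancel_left₀ _ two_ne_zero]

variable [MeasurableSpace H] [BorelSpace H] [SecondCountableTopology H]

theorem integratedTail_map_inner (μ : Measure H) (u : H) (c : ℝ) :
    integratedTail (μ.map (inner ℝ u)) c = ∫ ξ, max (inner ℝ u ξ - c) 0 ∂μ :=
  integral_map (by fun_prop) (by fun_prop)

theorem exists_integratedTail_map_inner_eq {u : H} (hu : u ≠ 0) (c : ℝ) :
    ∃ a b : H, ∀ (μ : Measure H) [IsFiniteMeasure μ], HasFiniteMoment 2 μ →
      integratedTail (μ.map (inner ℝ u)) c =
        ((distortion 2 μ {a}).toReal - (distortion 2 μ {a, b}).toReal) / 2 := by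
  obtain ⟨a, b, hab⟩ := exists_max_inner_sub_eq_infDist_sq_sub hu c
  refine ⟨a, b, fun μ _ hμ ↦ ?_⟩
  have ha := hμ.integrable_infDist_rpow zero_le_two (Set.singleton_nonempty a)
  have hb := hμ.integrable_infDist_rpow zero_le_two (Set.insert_nonempty a {b})
  rw [integratedTail_map_inner, toReal_distortion 2 μ zero_le_two (Set.singleton_nonempty a),
    toReal_distortion 2 μ zero_le_two (Set.insert_nonempty a {b}), ← integral_sub ha hb,
    ← integral_div]
  simp only [hab, Real.rpow_two]

theorem tendsto_integratedTail_map_inner_of_tendsto_distortion {ι : Type*} {l : Filter ι}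
    {μ : ι → Measure H} {ν : Measure H} [∀ i, IsFiniteMeasure (μ i)] [IsFiniteMeasure ν]
    (hμ : ∀ i, HasFiniteMoment 2 (μ i)) (hν : HasFiniteMoment 2 ν)
    (h : ∀ a b, Tendsto (fun i ↦ distortion 2 (μ i) {a, b}) l (𝓝 (distortion 2 ν {a, b})))
    {u : H} (hu : u ≠ 0) (c : ℝ) :
    Tendsto (fun i ↦ integratedTail ((μ i).map (inner ℝ u)) c) l
      (𝓝 (integratedTail (ν.map (inner ℝ u)) c)) := by
  have toReal_tendsto (a b : H) : Tendsto (fun i ↦ (distortion 2 (μ i) {a, b}).toReal) l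
      (𝓝 (distortion 2 ν {a, b}).toReal) :=
    (ENNReal.tendsto_toReal (hν.distortion_ne_top zero_le_two (Set.insert_nonempty a {b}))).comp
      (h a b)
  obtain ⟨a, b, hab⟩ := exists_integratedTail_map_inner_eq hu c
  simp only [hab _ (hμ _), hab _ hν]
  simpa using ((toReal_tendsto a a).sub (toReal_tendsto a b)).div_const 2

theorem HasFiniteMoment.integrable_id_map_inner {μ : Measure H} [IsFiniteMeasure μ]
    (hμ : HasFiniteMoment 2 μ) (u : H) : Integrable id (μ.map (inner ℝ u)) :=
  (integrable_map_measure (by fun_prop) (by fun_prop)).2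
    ((hμ.integrable_id one_le_two).const_inner u)

theorem tendsto_charFun_of_tendsto_distortion {μ : ℕ → ProbabilityMeasure H}
    {ν : ProbabilityMeasure H}
    (hμ : ∀ n, HasFiniteMoment 2 (μ n : Measure H)) (hν : HasFiniteMoment 2 (ν : Measure H))
    (h : ∀ a b, Tendsto (fun n ↦ distortion 2 (μ n : Measure H) {a, b}) atTop
      (𝓝 (distortion 2 (ν : Measure H) {a, b}))) (u : H) :
    Tendsto (fun n ↦ charFun (μ n : Measure H) u) atTop (𝓝 (charFun (ν : Measure H) u)) := by
  rcases eq_or_ne u 0 with rfl | hu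
  · simp
  have measurable_inner : Measurable (inner ℝ u : H → ℝ) := by fun_prop
  have marginals : Tendsto (fun n ↦ (μ n).map measurable_inner.aemeasurable) atTop
      (𝓝 (ν.map measurable_inner.aemeasurable)) :=
    tendsto_probabilityMeasure_of_tendsto_measureReal_Ioi fun c hc ↦
      tendsto_measureReal_Ioi_of_tendsto_integratedTail (fun n ↦ (hμ n).integrable_id_map_inner u)
        (hν.integrable_id_map_inner u)
        (tendsto_integratedTail_map_inner_of_tendsto_distortion hμ hν h hu) hc
  simpa only [ProbabilityMeasure.toMeasure_map, charFun_map_inner, one_smul] using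
    ProbabilityMeasure.tendsto_iff_tendsto_charFun.1 marginals 1

theorem tendsto_wassersteinDist_of_tendsto_distortion {μ : ℕ → ProbabilityMeasure H}
    {ν : ProbabilityMeasure H}
    (hμ : ∀ n, HasFiniteMoment 2 (μ n : Measure H)) (hν : HasFiniteMoment 2 (ν : Measure H))
    (h : ∀ a b, Tendsto (fun n ↦ distortion 2 (μ n : Measure H) {a, b}) atTop
      (𝓝 (distortion 2 (ν : Measure H) {a, b}))) :
    Tendsto (fun n ↦ wassersteinDist 2 (μ n : Measure H) ν) atTop (𝓝 0) := by
  have moments : Tendsto (fun n ↦ ∫⁻ ξ, ‖ξ‖ₑ ^ (2 : ℝ) ∂(μ n : Measure H)) atTop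
      (𝓝 (∫⁻ ξ, ‖ξ‖ₑ ^ (2 : ℝ) ∂(ν : Measure H))) := by
    simpa only [Set.pair_eq_singleton, distortion_singleton_zero] using h 0 0
  have weak : Tendsto μ atTop (𝓝 ν) := tendsto_of_tendsto_charFun_of_tendsto_lintegral
    (tendsto_charFun_of_tendsto_distortion hμ hν h) hν moments
  exact tendsto_wassersteinDist_of_tendsto two_pos weak hν moments

theorem tendsto_wassersteinDist_of_tendsto_quantErr {N : ℕ} (hN : 2 ≤ N) {μ : ℕ → Measure H}
    {ν : Measure H} [∀ n, IsProbabilityMeasure (μ n)] [IsProbabilityMeasure ν]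
    (hμ : ∀ n, HasFiniteMoment 2 (μ n)) (hν : HasFiniteMoment 2 ν)
    (h : ∀ x : Fin N → H, Tendsto (fun n ↦ quantErr 2 N (μ n) x) atTop (𝓝 (quantErr 2 N ν x))) :
    Tendsto (fun n ↦ wassersteinDist 2 (μ n) ν) atTop (𝓝 0) := by
  have pairs := tendsto_distortion_pair_of_tendsto_quantErr hN two_pos hμ hν h
  exact tendsto_wassersteinDist_of_tendsto_distortion (μ := fun n ↦ ⟨μ n, inferInstance⟩)
    (ν := ⟨ν, inferInstance⟩) hμ hν pairs

end Quantization

theorem stmt13_general {H : Type*} [NormedAddCommGroup H] [InnerProductSpace ℝ H]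
    [TopologicalSpace.SeparableSpace H] [MeasurableSpace H] [BorelSpace H] {N : ℕ} (hN : 2 ≤ N)
    (μ : ℕ → Measure H) (μ' : Measure H)
    [∀ n, IsProbabilityMeasure (μ n)] [IsProbabilityMeasure μ']
    (hμ : ∀ n, HasFiniteMoment 2 (μ n)) (hμ' : HasFiniteMoment 2 μ') :
    (Tendsto (fun n ↦ wassersteinDist 2 (μ n) μ') atTop (𝓝 0) ↔
      TendstoUniformly (fun n (x : Fin N → H) ↦ quantErr 2 N (μ n) x) (quantErr 2 N μ') atTop) ∧
    (Tendsto (fun n ↦ wassersteinDist 2 (μ n) μ') atTop (𝓝 0) ↔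
      ∀ x : Fin N → H,
        Tendsto (fun n ↦ quantErr 2 N (μ n) x) atTop (𝓝 (quantErr 2 N μ' x))) := by
  have := UniformSpace.secondCountable_of_separable H
  have : NeZero N := ⟨by omega⟩
  have uniform := tendstoUniformly_quantErr_of_tendsto_wassersteinDist (N := N) (l := atTop)
    one_le_two hμ hμ'
  have wasserstein := tendsto_wassersteinDist_of_tendsto_quantErr hN hμ hμ'
  exact ⟨⟨uniform, fun h ↦ wasserstein h.tendsto_at⟩,
    ⟨fun h ↦ (uniform h).tendsto_at, wasserstein⟩⟩

/-- `W₂`-convergence characterization in Hilbert space: for Borel probability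
measures with finite second moments on a separable Hilbert space,
`W₂(μ_n, μ_∞) → 0` iff `e_{2,2}(μ_n, ·) → e_{2,2}(μ_∞, ·)` uniformly on `H²` iff
`e_{2,2}(μ_n, ·) → e_{2,2}(μ_∞, ·)` pointwise on `H²`. -/
theorem stmt13 {H : Type*} [NormedAddCommGroup H] [InnerProductSpace ℝ H]
    [CompleteSpace H] [TopologicalSpace.SeparableSpace H]
    [MeasurableSpace H] [BorelSpace H]
    (μ : ℕ → Measure H) (μ' : Measure H)
    [∀ n, IsProbabilityMeasure (μ n)] [IsProbabilityMeasure μ']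
    (hμ : ∀ n, HasFiniteMoment 2 (μ n)) (hμ' : HasFiniteMoment 2 μ') :
    (Tendsto (fun n => wassersteinDist 2 (μ n) μ') atTop (𝓝 0) ↔
      TendstoUniformly (fun n (x : Fin 2 → H) => quantErr 2 2 (μ n) x)
        (quantErr 2 2 μ') atTop) ∧
    (Tendsto (fun n => wassersteinDist 2 (μ n) μ') atTop (𝓝 0) ↔
      ∀ x : Fin 2 → H,
        Tendsto (fun n => quantErr 2 2 (μ n) x) atTop (𝓝 (quantErr 2 2 μ' x))) :=
  stmt13_general le_rfl μ μ' hμ hμ'
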